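/- For n ≥ 4, the projective dimension of R/J_n equals n-2, where J_n is the Stanley-Reisner ideal of the n-cycle. -/

import Mathlib

/-- Cyclic adjacency of vertices `i, j` of the `n`-gon (labeled `0, …, n-1` in cyclic order). -/
def cycAdj (n : ℕ) (i j : Fin n) : Prop :=
  (i.val + 1) % n = j.val ∨ (j.val + 1) % n = i.val

/-- `p` is a diagonal of the convex `n`-gon: a pair of distinct non-adjacent vertices. -/
def IsDiagonal (n : ℕ) (p : Finset (Fin n)) : Prop :=
  ∃ i j : Fin n, i ≠ j ∧ ¬ cycAdj n i j ∧ p = {i, j}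

/-- Two chords of the convex `n`-gon cross (intersect in their interiors):
the endpoints interlace along the boundary. -/
def Cross (n : ℕ) (p q : Finset (Fin n)) : Prop :=
  ∃ a b c d : Fin n, a < c ∧ c < b ∧ b < d ∧
    ((p = {a, b} ∧ q = {c, d}) ∨ (p = {c, d} ∧ q = {a, b}))

/-- The Stanley–Reisner ideal `J n` of the `n`-cycle: the ideal of `K[x₀, …, x_{n-1}]`
generated by the monomials `xᵢxⱼ` over all diagonals `{i, j}` of the `n`-cycle. -/
noncomputable def cycleIdeal (n : ℕ) (K : Type) [Field K] :
    Ideal (MvPolynomial (Fin n) K) :=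
  Ideal.span {m | ∃ i j : Fin n, i ≠ j ∧ ¬ cycAdj n i j ∧
    m = MvPolynomial.X i * MvPolynomial.X j}

/-- A minimal free resolution of the `MvPolynomial (Fin n) K`-module `M`:
free modules `Fᵈ = Rᵇ⁽ᵈ⁾` with differentials `φ d : F^{d+1} → F^d`, an augmentation
`ε : F⁰ → M`, exactness, and minimality (all matrix entries of the differentials lie
in the maximal/irrelevant ideal, i.e. have zero constant coefficient). The rank `b d`
is then the `d`-th total Betti number `β_d(M)`. -/
structure MinimalFreeResolution (n : ℕ) (K : Type) [Field K]
    (M : Type) [AddCommGroup M] [Module (MvPolynomial (Fin n) K) M] where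
  b : ℕ → ℕ
  φ : ∀ d : ℕ, (Fin (b (d + 1)) →₀ MvPolynomial (Fin n) K) →ₗ[MvPolynomial (Fin n) K]
        (Fin (b d) →₀ MvPolynomial (Fin n) K)
  ε : (Fin (b 0) →₀ MvPolynomial (Fin n) K) →ₗ[MvPolynomial (Fin n) K] M
  surj : Function.Surjective ε
  exact_zero : LinearMap.ker ε = LinearMap.range (φ 0)
  exact_succ : ∀ d, LinearMap.ker (φ d) = LinearMap.range (φ (d + 1))
  minimal : ∀ d (i : Fin (b (d + 1))) (j : Fin (b d)),
    MvPolynomial.constantCoeff (φ d (Finsupp.single i 1) j) = 0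


open CategoryTheory Abelian

section ProjectiveDimension

variable {R : Type} [CommRing R]

/-- The module `M` has projective dimension less than `k`. -/
abbrev ProjDimLT (R : Type) [CommRing R] (M : Type) [AddCommGroup M] [Module R M] (k : ℕ) :
    Prop :=
  HasProjectiveDimensionLT (ModuleCat.of R M) k

section

variable {M₁ M₂ M₃ : Type} [AddCommGroup M₁] [AddCommGroup M₂] [AddCommGroup M₃]
  [Module R M₁] [Module R M₂] [Module R M₃]

lemma Function.Exact.moduleCat_shortExact {f : M₁ →ₗ[R] M₂} {g : M₂ →ₗ[R] M₃}
    (hfg : Function.Exact f g) (hf : Function.Injective f) (hg : Function.Surjective g) :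
    (ModuleCat.shortComplexOfCompEqZero f g hfg.linearMap_comp_eq_zero).ShortExact where
  exact := ModuleCat.shortComplex_exact _ hfg
  mono_f := (ModuleCat.mono_iff_injective _).2 hf
  epi_g := (ModuleCat.epi_iff_surjective _).2 hg

lemma projDimLT_iff_of_ker_eq [Module.Projective R M₁] {f : M₁ →ₗ[R] M₂}
    (hf : Function.Surjective f) {N : Submodule R M₁} (hN : LinearMap.ker f = N) (k : ℕ) :
    ProjDimLT R M₂ (k + 2) ↔ ProjDimLT R N (k + 1) := by
  subst hN
  exact (LinearMap.shortExact_shortComplexKer hf).hasProjectiveDimensionLT_X₃_iff k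
    ((IsProjective.iff_projective _).1 inferInstance)

lemma projDimLT_one_iff : ProjDimLT R M₁ 1 ↔ Module.Projective R M₁ := by
  rw [ProjDimLT, ← projective_iff_hasProjectiveDimensionLT_one, ← IsProjective.iff_projective]

lemma ProjDimLT.prod {k : ℕ} (h₁ : ProjDimLT R M₁ k) (h₂ : ProjDimLT R M₂ k) :
    ProjDimLT R (M₁ × M₂) k :=
  (Function.Exact.moduleCat_shortExact (Function.Exact.inl_snd (R := R) (M := M₁) (N := M₂))
    LinearMap.inl_injective LinearMap.snd_surjective).hasProjectiveDimensionLT_X₂ k h₁ h₂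

end

/-- The Mayer-Vietoris sequence `0 → R/(I ⊓ J) → R/I × R/J → R/(I ⊔ J) → 0`. -/
lemma Ideal.exists_shortExact_inf_sup (I J : Ideal R) :
    ∃ (f : (R ⧸ I ⊓ J) →ₗ[R] (R ⧸ I) × (R ⧸ J)) (g : (R ⧸ I) × (R ⧸ J) →ₗ[R] R ⧸ I ⊔ J),
      Function.Injective f ∧ Function.Exact f g ∧ Function.Surjective g := by
  refine ⟨(Submodule.factor inf_le_left).prod (Submodule.factor inf_le_right),
    (Submodule.factor le_sup_left).coprod (-Submodule.factor le_sup_right), ?_, ?_, ?_⟩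
  · rw [← LinearMap.ker_eq_bot, LinearMap.ker_eq_bot']
    intro x hx
    obtain ⟨x, rfl⟩ := Submodule.mkQ_surjective _ x
    obtain ⟨h₁, h₂⟩ := Prod.ext_iff.1 hx
    exact (Submodule.Quotient.mk_eq_zero _).2
      ⟨(Submodule.Quotient.mk_eq_zero _).1 h₁, (Submodule.Quotient.mk_eq_zero _).1 h₂⟩
  · rintro ⟨x, y⟩
    obtain ⟨x, rfl⟩ := Submodule.mkQ_surjective _ x
    obtain ⟨y, rfl⟩ := Submodule.mkQ_surjective _ y
    rw [LinearMap.coprod_apply, LinearMap.neg_apply, ← sub_eq_add_neg, Submodule.factor_mk,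
      Submodule.factor_mk, ← map_sub, Submodule.mkQ_apply, Submodule.Quotient.mk_eq_zero]
    constructor
    · intro h
      obtain ⟨a, ha, b, hb, hab⟩ := Submodule.mem_sup.1 h
      refine ⟨Submodule.mkQ _ (x - a), Prod.ext ((Submodule.Quotient.eq _).2 ?_)
        ((Submodule.Quotient.eq _).2 ?_)⟩
      · simpa using ha
      · change x - a - y ∈ J
        rwa [show x - a - y = b by linear_combination -hab]
    · rintro ⟨z, hz⟩
      obtain ⟨z, rfl⟩ := Submodule.mkQ_surjective _ z
      obtain ⟨h₁, h₂⟩ := Prod.ext_iff.1 hz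
      rw [show x - y = -(z - x) + (z - y) by ring]
      exact Submodule.add_mem_sup (neg_mem ((Submodule.Quotient.eq _).1 h₁))
        ((Submodule.Quotient.eq _).1 h₂)
  · intro x
    obtain ⟨x, rfl⟩ := Submodule.mkQ_surjective _ x
    exact ⟨(Submodule.Quotient.mk x, 0), by simp⟩

lemma ProjDimLT.quotient_inf {I J : Ideal R} {k : ℕ} (hI : ProjDimLT R (R ⧸ I) k)
    (hJ : ProjDimLT R (R ⧸ J) k) (hIJ : ProjDimLT R (R ⧸ I ⊔ J) (k + 1)) :
    ProjDimLT R (R ⧸ I ⊓ J) k := by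
  obtain ⟨f, g, hf, hfg, hg⟩ := Ideal.exists_shortExact_inf_sup I J
  exact (hfg.moduleCat_shortExact hf hg).hasProjectiveDimensionLT_X₁ k (hI.prod hJ) hIJ

lemma ProjDimLT.quotient_sup {I J : Ideal R} {k : ℕ} (hI : ProjDimLT R (R ⧸ I) (k + 1))
    (hJ : ProjDimLT R (R ⧸ J) (k + 1)) (hIJ : ProjDimLT R (R ⧸ I ⊓ J) k) :
    ProjDimLT R (R ⧸ I ⊔ J) (k + 1) := by
  obtain ⟨f, g, hf, hfg, hg⟩ := Ideal.exists_shortExact_inf_sup I J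
  exact (hfg.moduleCat_shortExact hf hg).hasProjectiveDimensionLT_X₃ k hIJ (hI.prod hJ)

section RegularElement

variable {I : Ideal R} {x : R}

lemma Ideal.lsmul_quotient_injective (hx : ∀ y, x * y ∈ I → y ∈ I) :
    Function.Injective (LinearMap.lsmul R (R ⧸ I) x) := by
  rw [← LinearMap.ker_eq_bot, LinearMap.ker_eq_bot']
  intro y hy
  obtain ⟨y, rfl⟩ := Submodule.mkQ_surjective _ y
  rw [Submodule.mkQ_apply, LinearMap.lsmul_apply, ← Submodule.Quotient.mk_smul,
    Submodule.Quotient.mk_eq_zero] at hy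
  exact (Submodule.Quotient.mk_eq_zero _).2 (hx y hy)

lemma Ideal.exact_lsmul_factor (I : Ideal R) (x : R) :
    Function.Exact (LinearMap.lsmul R (R ⧸ I) x)
      (Submodule.factor (le_sup_right : I ≤ Ideal.span {x} ⊔ I)) := by
  intro y
  obtain ⟨y, rfl⟩ := Submodule.mkQ_surjective _ y
  rw [Submodule.factor_mk, Submodule.mkQ_apply, Submodule.Quotient.mk_eq_zero]
  constructor
  · intro h
    obtain ⟨a, ha, b, hb, rfl⟩ := Submodule.mem_sup.1 h
    obtain ⟨c, rfl⟩ := Ideal.mem_span_singleton'.1 ha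
    refine ⟨Submodule.Quotient.mk c, ?_⟩
    rw [LinearMap.lsmul_apply, ← Submodule.Quotient.mk_smul, Submodule.mkQ_apply,
      Submodule.Quotient.eq]
    rw [show x • c - (c * x + b) = -b by rw [smul_eq_mul]; ring]
    exact neg_mem hb
  · rintro ⟨z, hz⟩
    obtain ⟨z, rfl⟩ := Submodule.mkQ_surjective _ z
    rw [LinearMap.lsmul_apply, ← map_smul, Submodule.mkQ_apply, Submodule.mkQ_apply,
      Submodule.Quotient.eq] at hz
    rw [show y = z * x + -(x • z - y) by rw [smul_eq_mul]; ring]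
    exact Submodule.add_mem_sup (Ideal.mem_span_singleton'.2 ⟨z, rfl⟩) (neg_mem hz)

lemma ProjDimLT.quotient_span_singleton_sup {k : ℕ} (h : ProjDimLT R (R ⧸ I) k)
    (hx : ∀ y, x * y ∈ I → y ∈ I) :
    ProjDimLT R (R ⧸ Ideal.span {x} ⊔ I) (k + 1) :=
  ((Ideal.exact_lsmul_factor I x).moduleCat_shortExact (Ideal.lsmul_quotient_injective hx)
    (Submodule.factor_surjective _)).hasProjectiveDimensionLT_X₃ k h
      (hasProjectiveDimensionLT_of_ge _ k (k + 1) k.le_succ)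

lemma nontrivial_ext_quotient_span_singleton_sup {N : ModuleCat.{0} R} {k : ℕ}
    (h : Nontrivial (Ext (ModuleCat.of R (R ⧸ I)) N k))
    (hx : ∀ y, x * y ∈ I → y ∈ I) (hN : x • 𝟙 N = 0) :
    Nontrivial (Ext (ModuleCat.of R (R ⧸ Ideal.span {x} ⊔ I)) N (k + 1)) := by
  have hS := (Ideal.exact_lsmul_factor I x).moduleCat_shortExact
    (Ideal.lsmul_quotient_injective hx) (Submodule.factor_surjective _)
  obtain ⟨e, he⟩ := exists_ne (0 : Ext (ModuleCat.of R (R ⧸ I)) N k)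
  refine ⟨hS.extClass.comp e (add_comm 1 k), 0, fun h0 => he ?_⟩
  obtain ⟨e', rfl⟩ := Ext.contravariant_sequence_exact₁ hS N e (add_comm 1 k) h0
  have hf : (ModuleCat.shortComplexOfCompEqZero (LinearMap.lsmul R (R ⧸ I) x)
      (Submodule.factor (le_sup_right : I ≤ Ideal.span {x} ⊔ I))
      (Ideal.exact_lsmul_factor I x).linearMap_comp_eq_zero).f =
      x • 𝟙 (ModuleCat.of R (R ⧸ I)) := rfl
  rw [hf, Ext.mk₀_smul, Ext.smul_comp]
  erw [Ext.mk₀_id_comp]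
  rw [Ext.smul_eq_comp_mk₀, hN, Ext.mk₀_zero, Ext.comp_zero]

end RegularElement

end ProjectiveDimension

namespace MinimalFreeResolution

variable {n : ℕ} {K : Type} [Field K] {M : Type} [AddCommGroup M]
  [Module (MvPolynomial (Fin n) K) M] (F : MinimalFreeResolution n K M)

lemma projDimLT_range_iff (d k : ℕ) :
    ProjDimLT (MvPolynomial (Fin n) K) M (d + k + 2) ↔
      ProjDimLT (MvPolynomial (Fin n) K) (LinearMap.range (F.φ d)) (k + 1) := by
  induction d generalizing k with
  | zero =>
    rw [zero_add]
    exact projDimLT_iff_of_ker_eq F.surj F.exact_zero k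
  | succ d ih =>
    rw [show d + 1 + k + 2 = d + (k + 1) + 2 by ring, ih]
    exact projDimLT_iff_of_ker_eq (F.φ d).surjective_rangeRestrict
      ((LinearMap.ker_rangeRestrict _).trans (F.exact_succ d)) k

lemma constantCoeff_φ_apply (d : ℕ) (v : Fin (F.b (d + 1)) →₀ MvPolynomial (Fin n) K)
    (j : Fin (F.b d)) : MvPolynomial.constantCoeff (F.φ d v j) = 0 := by
  induction v using Finsupp.induction_linear with
  | zero => simp
  | add v w hv hw => simp [hv, hw]
  | single i r =>
    rw [← mul_one r, ← smul_eq_mul, ← Finsupp.smul_single, map_smul]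
    simp [F.minimal d i j]

lemma b_eq_zero_iff (d : ℕ) :
    F.b (d + 2) = 0 ↔ ProjDimLT (MvPolynomial (Fin n) K) M (d + 2) := by
  rw [F.projDimLT_range_iff d 0, zero_add, projDimLT_one_iff]
  constructor
  · intro h
    have : IsEmpty (Fin (F.b (d + 1 + 1))) := by
      rw [show F.b (d + 1 + 1) = 0 from h]
      infer_instance
    have hinj : Function.Injective (F.φ d) := by
      rw [← LinearMap.ker_eq_bot, F.exact_succ, LinearMap.range_eq_bot]
      exact Subsingleton.elim _ _
    exact Module.Projective.of_equiv (LinearEquiv.ofInjective _ hinj)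
  · intro h
    obtain ⟨s, hs⟩ := Module.projective_lifting_property (F.φ d).rangeRestrict LinearMap.id
      (F.φ d).surjective_rangeRestrict
    -- `s` splits the surjection onto the projective syzygy; `ρ` lifts the resulting retraction.
    have hker (v) : v - s ((F.φ d).rangeRestrict v) ∈ LinearMap.range (F.φ (d + 1)) := by
      rw [← F.exact_succ, LinearMap.mem_ker, map_sub, sub_eq_zero]
      exact congrArg Subtype.val (LinearMap.congr_fun hs ((F.φ d).rangeRestrict v)).symm
    obtain ⟨ρ, hρ⟩ := Module.projective_lifting_property (F.φ (d + 1)).rangeRestrict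
      ((LinearMap.id - s ∘ₗ (F.φ d).rangeRestrict).codRestrict _ hker)
      (F.φ (d + 1)).surjective_rangeRestrict
    have hρ' (v) : F.φ (d + 1) (ρ v) = v - s ((F.φ d).rangeRestrict v) :=
      congrArg Subtype.val (LinearMap.congr_fun hρ v)
    by_contra hb
    let i : Fin (F.b (d + 1 + 1)) := ⟨0, Nat.pos_of_ne_zero hb⟩
    have hmem : ρ (F.φ (d + 1) (Finsupp.single i 1)) - Finsupp.single i 1 ∈
        LinearMap.range (F.φ (d + 2)) := by
      have h0 : (F.φ d).rangeRestrict (F.φ (d + 1) (Finsupp.single i 1)) = 0 := by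
        apply Subtype.ext
        have : F.φ (d + 1) (Finsupp.single i 1) ∈ LinearMap.ker (F.φ d) := by
          rw [F.exact_succ]
          exact LinearMap.mem_range_self _ _
        exact this
      rw [← F.exact_succ, LinearMap.mem_ker, map_sub, hρ', h0, map_zero, sub_zero, sub_self]
    obtain ⟨w, hw⟩ := hmem
    have hρm (v : Fin (F.b (d + 1)) →₀ MvPolynomial (Fin n) K)
        (hv : ∀ j, MvPolynomial.constantCoeff (v j) = 0) :
        MvPolynomial.constantCoeff (ρ v i) = 0 := by
      rw [← Finsupp.sum_single v, Finsupp.sum, map_sum, Finsupp.finsetSum_apply, map_sum]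
      refine Finset.sum_eq_zero fun j _ => ?_
      rw [← mul_one (v j), ← smul_eq_mul, ← Finsupp.smul_single, map_smul]
      simp [hv j]
    have h1 := congrArg MvPolynomial.constantCoeff (DFunLike.congr_fun hw i)
    rw [F.constantCoeff_φ_apply, Finsupp.sub_apply, map_sub,
      hρm _ (F.constantCoeff_φ_apply _ _), Finsupp.single_eq_same] at h1
    simp at h1

end MinimalFreeResolution

section MonomialIdeal

open MvPolynomial

variable {σ K : Type} [Field K]

/-- `I` is the ideal of all polynomials supported on the exponents in `P`. -/
def IsSupportedIdeal (I : Ideal (MvPolynomial σ K)) (P : Set (σ →₀ ℕ)) : Prop :=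
  ∀ f, f ∈ I ↔ ∀ m ∈ f.support, m ∈ P

namespace IsSupportedIdeal

variable {I J : Ideal (MvPolynomial σ K)} {P Q : Set (σ →₀ ℕ)}

lemma unique (hI : IsSupportedIdeal I P) (hJ : IsSupportedIdeal J P) : I = J := by
  ext f
  rw [hI, hJ]

lemma inf (hI : IsSupportedIdeal I P) (hJ : IsSupportedIdeal J Q) :
    IsSupportedIdeal (I ⊓ J) (P ∩ Q) := fun f => by
  rw [Submodule.mem_inf, hI, hJ]
  exact ⟨fun h m hm => ⟨h.1 m hm, h.2 m hm⟩, fun h => ⟨fun m hm => (h m hm).1,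
    fun m hm => (h m hm).2⟩⟩

lemma monomial_mem (hI : IsSupportedIdeal I P) {m : σ →₀ ℕ} (hm : m ∈ P) (c : K) :
    monomial m c ∈ I := by
  rw [hI]
  intro m' hm'
  rwa [Finset.mem_singleton.1 (support_monomial_subset hm')]

lemma sup (hI : IsSupportedIdeal I P) (hJ : IsSupportedIdeal J Q) :
    IsSupportedIdeal (I ⊔ J) (P ∪ Q) := fun f => by
  classical
  constructor
  · intro h m hm
    obtain ⟨a, ha, b, hb, rfl⟩ := Submodule.mem_sup.1 h
    exact (Finset.mem_union.1 (support_add hm)).imp ((hI a).1 ha m) ((hJ b).1 hb m)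
  · intro h
    rw [f.as_sum]
    refine Ideal.sum_mem _ fun m hm => ?_
    exact (h m hm).elim (fun hP => Ideal.mem_sup_left (hI.monomial_mem hP _))
      (fun hQ => Ideal.mem_sup_right (hJ.monomial_mem hQ _))

end IsSupportedIdeal

lemma isSupportedIdeal_span_X_image (s : Set σ) :
    IsSupportedIdeal (Ideal.span ((X : σ → MvPolynomial σ K) '' s)) {m | ∃ i ∈ s, m i ≠ 0} :=
  fun _ => mem_ideal_span_X_image

lemma mem_span_X_image_of_X_mul_mem {s : Set σ} {a : σ} (ha : a ∉ s) (f : MvPolynomial σ K)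
    (h : X a * f ∈ Ideal.span ((X : σ → MvPolynomial σ K) '' s)) :
    f ∈ Ideal.span ((X : σ → MvPolynomial σ K) '' s) := by
  classical
  rw [mem_ideal_span_X_image] at h ⊢
  intro m hm
  obtain ⟨i, hi, hmi⟩ := h (Finsupp.single a 1 + m) (by
    rw [mem_support_iff, coeff_X_mul]
    exact mem_support_iff.1 hm)
  refine ⟨i, hi, ?_⟩
  rwa [Finsupp.add_apply, Finsupp.single_eq_of_ne (by rintro rfl; exact ha hi), zero_add] at hmi

lemma span_X_image_insert [DecidableEq σ] (a : σ) (s : Finset σ) :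
    Ideal.span ((X : σ → MvPolynomial σ K) '' ↑(insert a s)) =
      Ideal.span {X a} ⊔ Ideal.span (X '' ↑s) := by
  rw [Finset.coe_insert, Set.image_insert_eq, Ideal.span_insert]

lemma projDimLT_quotient_span_X_image (s : Finset σ) :
    ProjDimLT (MvPolynomial σ K)
      (MvPolynomial σ K ⧸ Ideal.span ((X : σ → MvPolynomial σ K) '' ↑s)) (s.card + 1) := by
  classical
  induction s using Finset.induction_on with
  | empty =>
    rw [Finset.card_empty, zero_add, projDimLT_one_iff, Finset.coe_empty, Set.image_empty,
      Ideal.span_empty]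
    exact Module.Projective.of_equiv (Submodule.quotEquivOfEqBot _ rfl).symm
  | insert a s ha ih =>
    rw [Finset.card_insert_of_notMem ha, span_X_image_insert]
    exact ih.quotient_span_singleton_sup (mem_span_X_image_of_X_mul_mem (by simpa using ha))

variable (σ K) in
/-- The residue field at the origin, as a module over the polynomial ring. -/
noncomputable abbrev residueModule : ModuleCat.{0} (MvPolynomial σ K) :=
  ModuleCat.of (MvPolynomial σ K)
    (MvPolynomial σ K ⧸ Ideal.span ((X : σ → MvPolynomial σ K) '' Set.univ))

lemma X_smul_id_residueModule (a : σ) :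
    (X a : MvPolynomial σ K) • 𝟙 (residueModule σ K) = 0 := by
  refine ModuleCat.hom_ext (LinearMap.ext fun y => ?_)
  obtain ⟨y, rfl⟩ := Submodule.mkQ_surjective _ y
  exact (Submodule.Quotient.mk_eq_zero _).2
    (Ideal.mul_mem_right _ _ (Ideal.subset_span ⟨a, Set.mem_univ a, rfl⟩))

lemma nontrivial_ext_residueModule (s : Finset σ) :
    Nontrivial (Ext (ModuleCat.of (MvPolynomial σ K)
      (MvPolynomial σ K ⧸ Ideal.span ((X : σ → MvPolynomial σ K) '' ↑s)))
      (residueModule σ K) s.card) := by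
  classical
  induction s using Finset.induction_on with
  | empty =>
    rw [Finset.card_empty]
    refine Ext.homEquiv₀.nontrivial_congr.2 ⟨ModuleCat.ofHom (Submodule.factor
      (Ideal.span_mono (Set.image_mono (Set.subset_univ _)))), 0, fun h => ?_⟩
    have h1 : (1 : MvPolynomial σ K) ∈
        Ideal.span ((X : σ → MvPolynomial σ K) '' Set.univ) :=
      (Submodule.Quotient.mk_eq_zero _).1
        (LinearMap.congr_fun (congrArg ModuleCat.Hom.hom h) (Submodule.Quotient.mk 1))
    rw [mem_ideal_span_X_image] at h1
    obtain ⟨i, -, hi⟩ := h1 0 (by simp)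
    exact hi rfl
  | insert a s ha ih =>
    rw [Finset.card_insert_of_notMem ha, span_X_image_insert]
    exact nontrivial_ext_quotient_span_singleton_sup ih
      (mem_span_X_image_of_X_mul_mem (by simpa using ha)) (X_smul_id_residueModule a)

lemma not_projDimLT_quotient_span_X_image (s : Finset σ) :
    ¬ ProjDimLT (MvPolynomial σ K)
      (MvPolynomial σ K ⧸ Ideal.span ((X : σ → MvPolynomial σ K) '' ↑s)) s.card := fun h =>
  not_subsingleton_iff_nontrivial.2 (nontrivial_ext_residueModule s)
    (h.subsingleton _ _ _ le_rfl _)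

end MonomialIdeal

section Cycle

open MvPolynomial

variable {n : ℕ} {K : Type} [Field K]

/-- The prime ideal generated by the variables outside the face `s`. -/
noncomputable def faceIdeal (K : Type) [Field K] (s : Finset (Fin n)) :
    Ideal (MvPolynomial (Fin n) K) :=
  Ideal.span (X '' (↑sᶜ : Set (Fin n)))

lemma isSupportedIdeal_faceIdeal (s : Finset (Fin n)) :
    IsSupportedIdeal (faceIdeal K s) {m | ∃ j, j ∉ s ∧ m j ≠ 0} := by
  simpa [faceIdeal] using isSupportedIdeal_span_X_image (K := K) (↑sᶜ : Set (Fin n))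

lemma projDimLT_quotient_faceIdeal {s : Finset (Fin n)} {k : ℕ} (hk : n < s.card + k) :
    ProjDimLT (MvPolynomial (Fin n) K) (MvPolynomial (Fin n) K ⧸ faceIdeal K s) k := by
  have : ProjDimLT (MvPolynomial (Fin n) K) (MvPolynomial (Fin n) K ⧸ faceIdeal K s)
      (sᶜ.card + 1) := projDimLT_quotient_span_X_image sᶜ
  refine hasProjectiveDimensionLT_of_ge _ (sᶜ.card + 1) k ?_
  rw [Finset.card_compl, Fintype.card_fin]
  have := s.card_le_univ
  rw [Fintype.card_fin] at this
  omega

lemma not_projDimLT_quotient_faceIdeal_empty :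
    ¬ ProjDimLT (MvPolynomial (Fin n) K)
      (MvPolynomial (Fin n) K ⧸ faceIdeal K (∅ : Finset (Fin n))) n := by
  have h := not_projDimLT_quotient_span_X_image (K := K) (∅ᶜ : Finset (Fin n))
  rwa [Finset.card_compl, Finset.card_empty, Fintype.card_fin, Nat.sub_zero] at h

/-- The edge of the `n`-cycle joining the vertices `i` and `i + 1`. -/
def cycleEdge (n i : ℕ) : Finset (Fin n) :=
  {j | j.val = i ∨ j.val = (i + 1) % n}

lemma mem_cycleEdge {i : ℕ} {j : Fin n} :
    j ∈ cycleEdge n i ↔ j.val = i ∨ j.val = (i + 1) % n := by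
  simp [cycleEdge]

lemma card_cycleEdge {i : ℕ} (hn : 2 ≤ n) (hi : i < n) : (cycleEdge n i).card = 2 := by
  rw [Finset.card_eq_two]
  refine ⟨⟨i, hi⟩, ⟨(i + 1) % n, Nat.mod_lt _ (by omega)⟩, ?_, ?_⟩
  · rw [Ne, Fin.mk.injEq]
    rcases Nat.lt_or_ge (i + 1) n with h | h
    · rw [Nat.mod_eq_of_lt h]
      omega
    · rw [show i + 1 = n by omega, Nat.mod_self]
      omega
  · ext j
    simp [mem_cycleEdge, Fin.ext_iff]

/-- The intersection of the face ideals of the first `k` edges of the `n`-cycle. -/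
noncomputable def edgesIdeal (n : ℕ) (K : Type) [Field K] : ℕ → Ideal (MvPolynomial (Fin n) K)
  | 0 => ⊤
  | k + 1 => edgesIdeal n K k ⊓ faceIdeal K (cycleEdge n k)

lemma edgesIdeal_eq_inf {k : ℕ} (hk : 0 < k) :
    edgesIdeal n K k = edgesIdeal n K (k - 1) ⊓ faceIdeal K (cycleEdge n (k - 1)) := by
  obtain ⟨k, rfl⟩ := Nat.exists_eq_succ_of_ne_zero hk.ne'
  rfl

lemma isSupportedIdeal_edgesIdeal (k : ℕ) :
    IsSupportedIdeal (edgesIdeal n K k) {m | ∀ i < k, ∃ j, j ∉ cycleEdge n i ∧ m j ≠ 0} := by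
  induction k with
  | zero => exact fun f => by simp [edgesIdeal]
  | succ k ih =>
    rw [edgesIdeal]
    convert ih.inf (isSupportedIdeal_faceIdeal (K := K) (cycleEdge n k)) using 1
    ext m
    exact ⟨fun h => ⟨fun i hi => h i (by omega), h k (by omega)⟩, fun h i hi =>
      (Nat.lt_succ_iff_lt_or_eq.1 hi).elim (h.1 i) (by rintro rfl; exact h.2)⟩

lemma edgesIdeal_sup_faceIdeal {k : ℕ} (hk : 0 < k) (hkn : k + 1 < n) :
    edgesIdeal n K k ⊔ faceIdeal K (cycleEdge n k) = faceIdeal K {⟨k, by omega⟩} := by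
  refine ((isSupportedIdeal_edgesIdeal k).sup (isSupportedIdeal_faceIdeal _)).unique ?_
  convert isSupportedIdeal_faceIdeal (K := K) {(⟨k, by omega⟩ : Fin n)} using 1
  ext m
  simp only [Set.mem_ofPred_eq, Set.mem_union, mem_cycleEdge, Finset.mem_singleton, Fin.ext_iff]
  constructor
  · rintro (h | ⟨j, hj, hm⟩)
    · obtain ⟨j, hj, hm⟩ := h (k - 1) (by omega)
      rw [Nat.sub_add_cancel hk, Nat.mod_eq_of_lt (by omega)] at hj
      exact ⟨j, by omega, hm⟩
    · exact ⟨j, by omega, hm⟩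
  · rintro ⟨j, hj, hm⟩
    rw [or_iff_not_imp_right]
    intro h i hi
    refine ⟨j, fun hji => h ⟨j, fun hjk => ?_, hm⟩, hm⟩
    rw [Nat.mod_eq_of_lt (by omega)] at hji hjk
    omega

lemma edgesIdeal_sup_faceIdeal_last (hn : 3 ≤ n) :
    edgesIdeal n K (n - 1) ⊔ faceIdeal K (cycleEdge n (n - 1)) =
      faceIdeal K {⟨0, by omega⟩} ⊓ faceIdeal K {⟨n - 1, by omega⟩} := by
  refine ((isSupportedIdeal_edgesIdeal _).sup (isSupportedIdeal_faceIdeal _)).unique ?_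
  convert (isSupportedIdeal_faceIdeal (K := K) {(⟨0, by omega⟩ : Fin n)}).inf
    (isSupportedIdeal_faceIdeal (K := K) {(⟨n - 1, by omega⟩ : Fin n)}) using 1
  ext m
  simp only [Set.mem_ofPred_eq, Set.mem_union, Set.mem_inter_iff, mem_cycleEdge,
    Finset.mem_singleton, Fin.ext_iff]
  rw [Nat.sub_add_cancel (by omega : 1 ≤ n), Nat.mod_self]
  constructor
  · rintro (h | ⟨j, hj, hm⟩)
    · obtain ⟨j, hj, hm⟩ := h 0 (by omega)
      obtain ⟨j', hj', hm'⟩ := h (n - 2) (by omega)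
      rw [show n - 2 + 1 = n - 1 by omega, Nat.mod_eq_of_lt (by omega)] at hj'
      exact ⟨⟨j, by omega, hm⟩, ⟨j', by omega, hm'⟩⟩
    · exact ⟨⟨j, by omega, hm⟩, ⟨j, by omega, hm⟩⟩
  · rintro ⟨⟨j, hj, hm⟩, ⟨j', hj', hm'⟩⟩
    rw [or_iff_not_imp_right]
    intro h i hi
    rw [Nat.mod_eq_of_lt (by omega)]
    have hT (l : Fin n) (hl : m l ≠ 0) : l.val = n - 1 ∨ l.val = 0 := by
      by_contra hc
      exact h ⟨l, hc, hl⟩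
    have h₁ := hT j hm
    have h₂ := hT j' hm'
    by_cases h0 : i = 0
    · exact ⟨j, by omega, hm⟩
    · exact ⟨j', by omega, hm'⟩

lemma faceIdeal_singleton_sup {i j : Fin n} (h : i ≠ j) :
    faceIdeal K {i} ⊔ faceIdeal K {j} = faceIdeal K ∅ := by
  refine ((isSupportedIdeal_faceIdeal _).sup (isSupportedIdeal_faceIdeal _)).unique ?_
  convert isSupportedIdeal_faceIdeal (K := K) (∅ : Finset (Fin n)) using 1
  ext m
  simp only [Set.mem_ofPred_eq, Set.mem_union, Finset.mem_singleton, Finset.notMem_empty,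
    not_false_eq_true, true_and]
  constructor
  · rintro (⟨l, -, hl⟩ | ⟨l, -, hl⟩) <;> exact ⟨l, hl⟩
  · rintro ⟨l, hl⟩
    by_cases hli : l = i
    · exact Or.inr ⟨l, by rwa [hli], hl⟩
    · exact Or.inl ⟨l, hli, hl⟩

lemma cycAdj_iff {i j : Fin n} :
    cycAdj n i j ↔ i.val + 1 = j.val ∨ j.val + 1 = i.val ∨
      (i.val + 1 = n ∧ j.val = 0) ∨ (j.val + 1 = n ∧ i.val = 0) := by
  have hmod (l : Fin n) : (l.val + 1) % n = if l.val + 1 = n then 0 else l.val + 1 := by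
    split_ifs with h
    · rw [h, Nat.mod_self]
    · exact Nat.mod_eq_of_lt (by omega)
  rw [cycAdj, hmod, hmod]
  split_ifs <;> omega

/-- A set of vertices contained in no edge of the cycle contains a diagonal. -/
lemma exists_diagonal_of_not_subset_cycleEdge (hn : 4 ≤ n) {s : Set (Fin n)}
    (h : ∀ i < n, ∃ j, j ∉ cycleEdge n i ∧ j ∈ s) :
    ∃ i ∈ s, ∃ j ∈ s, i ≠ j ∧ ¬ cycAdj n i j := by
  by_contra! hc
  have hmem {i : ℕ} (hi : i < n) {j : Fin n} : j ∈ cycleEdge n i ↔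
      j.val = i ∨ (i + 1 = j.val ∨ i + 1 = n ∧ j.val = 0) := by
    rw [mem_cycleEdge]
    rcases Nat.lt_or_ge (i + 1) n with h | h
    · rw [Nat.mod_eq_of_lt h]
      omega
    · rw [show i + 1 = n by omega, Nat.mod_self]
      omega
  obtain ⟨a, -, ha⟩ := h 0 (by omega)
  obtain ⟨b, hb, hbs⟩ := h a a.isLt
  rw [hmem a.isLt] at hb
  have hab := cycAdj_iff.1 (hc a ha b hbs (by rintro rfl; simp at hb))
  -- `b` is the predecessor of `a`, and a third vertex cannot be adjacent to both.
  obtain ⟨c, hcb, hcs⟩ := h b b.isLt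
  rw [hmem b.isLt] at hcb
  have hbc := cycAdj_iff.1 (hc b hbs c hcs (by rintro rfl; simp at hcb))
  have hac := cycAdj_iff.1 (hc a ha c hcs (by rintro rfl; omega))
  omega

lemma cycleIdeal_eq_edgesIdeal (hn : 4 ≤ n) : cycleIdeal n K = edgesIdeal n K n := by
  classical
  apply le_antisymm
  · rw [cycleIdeal, Ideal.span_le]
    rintro _ ⟨i, j, hij, hadj, rfl⟩
    have hmon : (X i * X j : MvPolynomial (Fin n) K) =
        monomial (Finsupp.single i 1 + Finsupp.single j 1) 1 := by
      simp [X, monomial_mul]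
    rw [hmon]
    refine (isSupportedIdeal_edgesIdeal n).monomial_mem (fun k _ => ?_) 1
    by_contra! h
    have hi := mem_cycleEdge.1 (not_imp_comm.1 (h i) (by simp))
    have hj := mem_cycleEdge.1 (not_imp_comm.1 (h j) (by simp))
    rcases hi with hi | hi <;> rcases hj with hj | hj
    · exact hij (Fin.ext (hi.trans hj.symm))
    · exact hadj (Or.inl (by rw [hi, hj]))
    · exact hadj (Or.inr (by rw [hi, hj]))
    · exact hij (Fin.ext (hi.trans hj.symm))
  · intro f hf
    rw [isSupportedIdeal_edgesIdeal] at hf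
    rw [f.as_sum]
    refine Ideal.sum_mem _ fun m hm => ?_
    obtain ⟨i, hi, j, hj, hij, hadj⟩ :=
      exists_diagonal_of_not_subset_cycleEdge hn (s := {j | m j ≠ 0}) (hf m hm)
    have hle : Finsupp.single i 1 + Finsupp.single j 1 ≤ m := by
      intro l
      have hi' : m i ≠ 0 := hi
      have hj' : m j ≠ 0 := hj
      rw [Finsupp.add_apply, Finsupp.single_apply, Finsupp.single_apply]
      split_ifs with h₁ h₂ h₂
      · exact absurd (h₁.trans h₂.symm) hij
      · subst h₁
        omega
      · subst h₂
        omega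
      · omega
    obtain ⟨c, rfl⟩ := exists_add_of_le hle
    have hmon : monomial (Finsupp.single i 1 + Finsupp.single j 1 + c)
        (coeff (Finsupp.single i 1 + Finsupp.single j 1 + c) f) = X i * X j *
        monomial c (coeff (Finsupp.single i 1 + Finsupp.single j 1 + c) f) := by
      simp [X, monomial_mul]
    rw [hmon]
    exact Ideal.mul_mem_right _ _ (Ideal.subset_span ⟨i, j, hij, hadj, rfl⟩)

lemma projDimLT_quotient_edgesIdeal {k : ℕ} (hk : 0 < k) (hkn : k < n) :
    ProjDimLT (MvPolynomial (Fin n) K) (MvPolynomial (Fin n) K ⧸ edgesIdeal n K k) (n - 1) := by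
  induction k, hk using Nat.le_induction with
  | base =>
    rw [edgesIdeal, edgesIdeal, top_inf_eq]
    exact projDimLT_quotient_faceIdeal (by rw [card_cycleEdge] <;> omega)
  | succ k hk ih =>
    refine (ih (by omega)).quotient_inf
      (projDimLT_quotient_faceIdeal (by rw [card_cycleEdge] <;> omega)) ?_
    rw [edgesIdeal_sup_faceIdeal hk hkn]
    exact projDimLT_quotient_faceIdeal (by rw [Finset.card_singleton]; omega)

lemma projDimLT_quotient_cycleIdeal (hn : 4 ≤ n) :
    ProjDimLT (MvPolynomial (Fin n) K) (MvPolynomial (Fin n) K ⧸ cycleIdeal n K) (n - 1) := by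
  rw [cycleIdeal_eq_edgesIdeal hn, edgesIdeal_eq_inf (by omega)]
  refine (projDimLT_quotient_edgesIdeal (by omega) (by omega)).quotient_inf
    (projDimLT_quotient_faceIdeal (by rw [card_cycleEdge] <;> omega)) ?_
  rw [edgesIdeal_sup_faceIdeal_last (by omega)]
  have hpt (i : Fin n) : ProjDimLT (MvPolynomial (Fin n) K)
      (MvPolynomial (Fin n) K ⧸ faceIdeal K {i}) (n - 1 + 1) :=
    projDimLT_quotient_faceIdeal (by rw [Finset.card_singleton]; omega)
  refine (hpt _).quotient_inf (hpt _) ?_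
  rw [faceIdeal_singleton_sup (by rw [Ne, Fin.mk.injEq]; omega)]
  exact projDimLT_quotient_faceIdeal (by rw [Finset.card_empty]; omega)

lemma not_projDimLT_quotient_cycleIdeal (hn : 4 ≤ n) :
    ¬ ProjDimLT (MvPolynomial (Fin n) K) (MvPolynomial (Fin n) K ⧸ cycleIdeal n K) (n - 2) := by
  rw [cycleIdeal_eq_edgesIdeal hn, edgesIdeal_eq_inf (by omega)]
  intro h
  have hpath : ProjDimLT (MvPolynomial (Fin n) K)
      (MvPolynomial (Fin n) K ⧸ edgesIdeal n K (n - 1)) (n - 2 + 1) := by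
    rw [show n - 2 + 1 = n - 1 by omega]
    exact projDimLT_quotient_edgesIdeal (by omega) (by omega)
  have hpts := hpath.quotient_sup
    (projDimLT_quotient_faceIdeal (by rw [card_cycleEdge] <;> omega)) h
  rw [edgesIdeal_sup_faceIdeal_last (by omega)] at hpts
  have hpt (i : Fin n) : ProjDimLT (MvPolynomial (Fin n) K)
      (MvPolynomial (Fin n) K ⧸ faceIdeal K {i}) (n - 2 + 1 + 1) :=
    projDimLT_quotient_faceIdeal (by rw [Finset.card_singleton]; omega)
  have hempty := (hpt _).quotient_sup (hpt _) hpts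
  rw [faceIdeal_singleton_sup (by rw [Ne, Fin.mk.injEq]; omega),
    show n - 2 + 1 + 1 = n by omega] at hempty
  exact not_projDimLT_quotient_faceIdeal_empty hempty

end Cycle

/-- For `n ≥ 4`, the projective dimension of `R/Jₙ` equals `n - 2`: any minimal free
resolution of `R/Jₙ` has a nonzero module in homological degree `n - 2` and zero
modules in all higher degrees. -/
theorem projdim_cycle (K : Type) [Field K] (n : ℕ) (hn : 4 ≤ n)
    (F : MinimalFreeResolution n K (MvPolynomial (Fin n) K ⧸ cycleIdeal n K)) :
    F.b (n - 2) ≠ 0 ∧ ∀ d : ℕ, n - 2 < d → F.b d = 0 := by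
  have hb {d : ℕ} (hd : 2 ≤ d) : F.b d = 0 ↔ ProjDimLT (MvPolynomial (Fin n) K)
      (MvPolynomial (Fin n) K ⧸ cycleIdeal n K) d := by
    obtain ⟨d, rfl⟩ := Nat.exists_eq_add_of_le' hd
    exact F.b_eq_zero_iff d
  refine ⟨fun h => not_projDimLT_quotient_cycleIdeal hn ((hb (by omega)).1 h), fun d hd => ?_⟩
  have := projDimLT_quotient_cycleIdeal (K := K) hn
  exact (hb (by omega)).2 (hasProjectiveDimensionLT_of_ge _ (n - 1) d (by omega))
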